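/- arXiv:1712.02572 — 3 statements merged into one kernel-verified Lean document; each statement's English description precedes it below -/
import Mathlib

section
/- Let α ≥ 2 be an even integer, N a prime, s a positive integer, γ_u ≥ 0 weights for u ⊆ {1,…,s}, and set γ''_u = γ_u·(3/(2^{2α+1}π^{2α}))^{|u|}. Then for every λ ∈ (1/α, 1] there exists a generating vector z ∈ {1,…,N−1}^s such that Σ_{∅≠u⊆{1,…,s}} (γ''_u)^{1/2} · Σ_{k∈P^{⊥,u}_{N,z}} Π_{j∈u} 1/k_j^α ≤ (N−1)^{−1/λ} · ( Σ_{∅≠u⊆{1,…,s}} γ_u^{λ/2} · ( 3^{λ/2}·ζ(αλ) / ( 2^{(2α+1)λ/2−1}·π^{αλ} ) )^{|u|} )^{1/λ}, where ζ denotes the Riemann zeta function. -/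
/-!
The proof is an averaging argument combined with the inequality `(∑ xᵢ)^λ ≤ ∑ xᵢ^λ` for
`0 < λ ≤ 1`, which replaces the exponent `α` by `αλ > 1` and the weights `√γ''_u` by
`(γ''_u)^{λ/2}`; this gives a bound for the `λ`-th power of the left-hand side
(`rpow_sum_le`, `latSum_rpow_le`). It then suffices to find one `z` for which the modified sum is
at most its mean over `{1,…,N-1}^s`.

For the mean (`sum_latSum_le`), fix a nonempty `u`, a coordinate `j₀ ∈ u`, and the frequencies and
generators of all the other coordinates; their contribution to the congruence is an integer `c`.
The sum over `z_{j₀} ∈ {1,…,N-1}` and `k ≠ 0` with `N ∣ k z_{j₀} + c` of `|k|^{-αλ}` is at most the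
full sum `2ζ(αλ)` (`sum_one_dim`). When `N ∤ c`, each `k` admits at most one `z_{j₀}`. When `N ∣ c`,
exactly the multiples of `N` contribute, and the total is `(N-1) N^{-αλ} · 2ζ(αλ) ≤ 2ζ(αλ)`. Hence
the mean over `z` is at most `(2ζ(αλ))^{|u|} / (N-1)`.

Everything is computed in `ℝ≥0∞`, where no summability side conditions arise.
-/

open Real

/-- The Riemann zeta function for real arguments `x > 1`, as a Dirichlet series. -/
noncomputable def zetaR (x : ℝ) : ℝ := ∑' n : ℕ+, 1 / ((n : ℕ) : ℝ) ^ x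

/-- The sum `Σ_{k ∈ P^{⊥,u}_{N,z}} Π_{j∈u} 1/k_j^α` over the `u`-part of the dual lattice. -/
noncomputable def dualSum (N : ℕ) {s : ℕ} (z : Fin s → ℤ) (u : Finset (Fin s)) (α : ℕ) : ℝ :=
  ∑' k : {k : {j // j ∈ u} → ℤ //
      (∀ j, k j ≠ 0) ∧ ((N : ℤ) ∣ ∑ j ∈ u.attach, k j * z j.1)},
    ∏ j ∈ u.attach, (1 : ℝ) / ((k.1 j : ℝ)) ^ α

open scoped ENNReal

/-- The Korobov weight `|k|^{-a}` of a nonzero frequency, set to `0` at `k = 0` so that sums over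
`ℤ` and over `ℤ ∖ {0}` coincide. Extended nonnegative values make all rearrangements free. -/
noncomputable def wt (a : ℝ) (k : ℤ) : ℝ≥0∞ :=
  if k = 0 then 0 else ENNReal.ofReal (|(k : ℝ)| ^ (-a))

/-- The sum of `∏ |k_j|^{-a}` over the `u`-part of the dual lattice, for a real exponent `a`. -/
noncomputable def latSum (N : ℕ) {s : ℕ} (z : Fin s → ℤ) (u : Finset (Fin s)) (a : ℝ) : ℝ≥0∞ :=
  ∑' k : {j // j ∈ u} → ℤ,
    if (N : ℤ) ∣ ∑ j, k j * z j.1 then ∏ j, wt a (k j) else 0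

lemma wt_rpow (a : ℝ) {lam : ℝ} (hlam : 0 < lam) (k : ℤ) : wt a k ^ lam = wt (a * lam) k := by
  unfold wt
  split_ifs with h
  · simp [hlam]
  · rw [ENNReal.ofReal_rpow_of_nonneg (by positivity) hlam.le, ← Real.rpow_mul (by positivity),
      neg_mul]

/-- Dilating a frequency by `N` costs at least a factor `N`, because `a > 1`. -/
lemma mul_wt_mul_le {a : ℝ} (ha : 1 < a) {N : ℕ} (hN : 0 < N) (m : ℤ) :
    (N : ℝ≥0∞) * wt a (N * m) ≤ wt a m := by
  unfold wt
  by_cases hm : m = 0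
  · simp [hm]
  have hN' : (N : ℤ) * m ≠ 0 := mul_ne_zero (by exact_mod_cast hN.ne') hm
  have hNr : (1 : ℝ) ≤ N := by exact_mod_cast hN
  rw [if_neg hm, if_neg hN', ← ENNReal.ofReal_natCast, ← ENNReal.ofReal_mul (by positivity)]
  apply ENNReal.ofReal_le_ofReal
  push_cast
  rw [abs_mul, Real.mul_rpow (by positivity) (by positivity), ← mul_assoc,
    abs_of_nonneg (by positivity : (0 : ℝ) ≤ N)]
  have h1 : (N : ℝ) * (N : ℝ) ^ (-a) ≤ 1 := by
    calc (N : ℝ) * (N : ℝ) ^ (-a) ≤ (N : ℝ) * (N : ℝ) ^ (-1 : ℝ) := by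
          gcongr
      _ = 1 := by
          rw [Real.rpow_neg_one]
          exact mul_inv_cancel₀ (by positivity)
  exact mul_le_of_le_one_left (by positivity) h1

lemma tsum_wt {a : ℝ} (ha : 1 < a) : ∑' k : ℤ, wt a k = ENNReal.ofReal (2 * zetaR a) := by
  have hs : Summable (fun n : ℕ => 1 / ((n + 1 : ℕ) : ℝ) ^ a) :=
    (summable_nat_add_iff 1).2 (Real.summable_one_div_nat_rpow.2 ha)
  have hz : zetaR a = ∑' n : ℕ, 1 / ((n + 1 : ℕ) : ℝ) ^ a :=
    tsum_pnat_eq_tsum_succ (f := fun n : ℕ => 1 / ((n : ℕ) : ℝ) ^ a)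
  have h1 : ∀ n : ℕ, wt a ((n : ℤ) + 1) = ENNReal.ofReal (1 / ((n + 1 : ℕ) : ℝ) ^ a) := by
    intro n
    have h0 : (0 : ℝ) ≤ (n : ℝ) + 1 := by positivity
    rw [wt, if_neg (by omega)]
    push_cast
    rw [abs_of_nonneg h0, Real.rpow_neg h0, one_div]
  have h2 : ∀ n : ℕ, wt a (-((n : ℤ) + 1)) = wt a ((n : ℤ) + 1) := by
    intro n
    simp only [wt, neg_eq_zero, Int.cast_neg, abs_neg]
  rw [tsum_of_add_one_of_neg_add_one ENNReal.summable ENNReal.summable]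
  simp only [h2, h1]
  rw [← ENNReal.ofReal_tsum_of_nonneg (fun n => by positivity) hs, ← hz, wt, if_pos rfl, add_zero,
    two_mul, ENNReal.ofReal_add] <;>
  · rw [hz]; positivity

/-- The averaging step in one coordinate, uniformly in the contribution `c` of the other
coordinates. If `N ∣ c`, only multiples of `N` contribute, whatever `z` is; otherwise
each frequency `k` satisfies the congruence for at most one `z`. -/
lemma sum_one_dim {a : ℝ} (ha : 1 < a) {N : ℕ} (hN : N.Prime) (c : ℤ) :
    ∑ z : Finset.Icc (1 : ℤ) ((N : ℤ) - 1),
      ∑' k : ℤ, (if (N : ℤ) ∣ k * (z : ℤ) + c then wt a k else 0) ≤ ∑' k : ℤ, wt a k := by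
  have hp : Prime (N : ℤ) := Nat.prime_iff_prime_int.1 hN
  have hN1 := hN.one_lt
  have hz : ∀ z : Finset.Icc (1 : ℤ) ((N : ℤ) - 1), ¬ (N : ℤ) ∣ (z : ℤ) := by
    rintro ⟨z, hz⟩ hd
    rw [Finset.mem_Icc] at hz
    have := Int.le_of_dvd (by simpa using by omega) hd
    simp only at this
    omega
  by_cases hc : (N : ℤ) ∣ c
  · have h1 : ∀ z : Finset.Icc (1 : ℤ) ((N : ℤ) - 1),
        ∑' k : ℤ, (if (N : ℤ) ∣ k * (z : ℤ) + c then wt a k else 0)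
          = ∑' m : ℤ, wt a (N * m) := by
      intro z
      have hinj : Function.Injective (fun m : ℤ => (N : ℤ) * m) :=
        mul_right_injective₀ hp.ne_zero
      rw [← hinj.tsum_eq]
      · refine tsum_congr fun m => ?_
        rw [if_pos]
        exact dvd_add (Dvd.intro _ (mul_assoc _ _ _).symm) hc
      · intro k hk
        have hd : (N : ℤ) ∣ k * (z : ℤ) + c := by
          by_contra h
          simp [h] at hk
        obtain ⟨m, hm⟩ := (hp.dvd_or_dvd ((dvd_add_left hc).1 hd)).resolve_right (hz z)
        exact ⟨m, hm.symm⟩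
    rw [Finset.sum_congr rfl fun z _ => h1 z, Finset.sum_const, Finset.card_univ, nsmul_eq_mul,
      ← ENNReal.tsum_mul_left]
    refine ENNReal.tsum_le_tsum fun m => le_trans ?_ (mul_wt_mul_le ha hN.pos m)
    gcongr
    simp
  · rw [← Summable.tsum_finsetSum fun _ _ => ENNReal.summable]
    refine ENNReal.tsum_le_tsum fun k => ?_
    rw [← Finset.sum_filter, Finset.sum_const, nsmul_eq_mul]
    refine mul_le_of_le_one_left zero_le ?_
    rw [Nat.cast_le_one, Finset.card_le_one]
    rintro ⟨x, hx⟩ hx' ⟨y, hy⟩ hy'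
    simp only [Finset.mem_filter, Finset.mem_univ, true_and] at hx' hy'
    have hk : ¬ (N : ℤ) ∣ k := fun h => hc ((dvd_add_right (h.mul_right x)).1 hx')
    have hd : (N : ℤ) ∣ k * (x - y) := by
      have := dvd_sub hx' hy'
      rwa [add_sub_add_right_eq_sub, ← mul_sub] at this
    have hd' := (hp.dvd_or_dvd hd).resolve_left hk
    rw [Finset.mem_Icc] at hx hy
    have := Int.eq_zero_of_abs_lt_dvd hd' (by rw [abs_lt]; omega)
    exact Subtype.ext (by simpa using sub_eq_zero.1 this)

lemma tsum_prod_pi (f : ℤ → ℝ≥0∞) (n : ℕ) :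
    ∀ (ι : Type) [Fintype ι] [DecidableEq ι], Fintype.card ι = n →
      ∑' k : ι → ℤ, ∏ j, f (k j) = (∑' k, f k) ^ n := by
  induction n with
  | zero =>
    intro ι _ _ h
    have : IsEmpty ι := Fintype.card_eq_zero_iff.1 h
    simp
  | succ n ih =>
    intro ι _ _ h
    obtain ⟨i⟩ : Nonempty ι := Fintype.card_pos_iff.1 (by omega)
    rw [← (Equiv.funSplitAt i ℤ).symm.tsum_eq]
    have h1 : ∀ p : ℤ × ({j // j ≠ i} → ℤ),
        ∏ j, f ((Equiv.funSplitAt i ℤ).symm p j) = f p.1 * ∏ j, f (p.2 j) := by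
      intro p
      rw [Fintype.prod_eq_mul_prod_subtype_ne _ i]
      congr 1
      · simp
      · exact Finset.prod_congr rfl fun j _ => by simp [j.2]
    rw [tsum_congr h1, ENNReal.tsum_prod
      (f := fun (x : ℤ) (y : {j // j ≠ i} → ℤ) => f x * ∏ j, f (y j))]
    simp only [ENNReal.tsum_mul_left, ENNReal.tsum_mul_right]
    rw [ih _ (by simp [h]), pow_succ']

/-- Summing the dual-lattice sum over all generating vectors: one coordinate `j₀ ∈ u` is averaged
out with `sum_one_dim`, which gains the factor `N - 1`, and the rest is estimated trivially. -/
lemma sum_latSum_le {a : ℝ} (ha : 1 < a) {N : ℕ} (hN : N.Prime) {s : ℕ}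
    {u : Finset (Fin s)} (hu : u.Nonempty) :
    ∑ z : Fin s → Finset.Icc (1 : ℤ) ((N : ℤ) - 1), latSum N (fun j => (z j : ℤ)) u a
      ≤ ((N - 1 : ℕ) : ℝ≥0∞) ^ (s - 1) * (∑' k : ℤ, wt a k) ^ u.card := by
  obtain ⟨j₀, hj₀⟩ := hu
  let i₀ : {j // j ∈ u} := ⟨j₀, hj₀⟩
  set Z := {x // x ∈ Finset.Icc (1 : ℤ) ((N : ℤ) - 1)} with hZ
  let eZ := Equiv.funSplitAt j₀ Z
  let eK := Equiv.funSplitAt i₀ ℤ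
  have hne : ∀ i : {i : {j // j ∈ u} // i ≠ i₀}, i.1.1 ≠ j₀ := fun i h => i.2 (Subtype.ext h)
  let c : ({i // i ≠ i₀} → ℤ) → ({j // j ≠ j₀} → Z) → ℤ :=
    fun k z => ∑ i, k i * (z ⟨i.1.1, hne i⟩ : ℤ)
  have hsum : ∀ p q, ∑ j, eK.symm p j * ((eZ.symm q j.1 : Z) : ℤ) = p.1 * (q.1 : ℤ) + c p.2 q.2 := by
    intro p q
    rw [Fintype.sum_eq_add_sum_subtype_ne _ i₀]
    congr 1
    · simp [eK, eZ, i₀]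
    · exact Finset.sum_congr rfl fun i _ => by simp [eK, eZ, i.2, hne i]
  have hprod : ∀ p, ∏ j, wt a (eK.symm p j) = wt a p.1 * ∏ j, wt a (p.2 j) := by
    intro p
    rw [Fintype.prod_eq_mul_prod_subtype_ne _ i₀]
    congr 1
    · simp [eK]
    · exact Finset.prod_congr rfl fun j _ => by simp [eK, j.2]
  have hlat : ∀ q, latSum N (fun j => ((eZ.symm q j : Z) : ℤ)) u a =
      ∑' kr, ∑' k : ℤ, (if (N : ℤ) ∣ k * (q.1 : ℤ) + c kr q.2 then wt a k else 0)
        * ∏ j, wt a (kr j) := by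
    intro q
    rw [latSum, ← eK.symm.tsum_eq, ENNReal.tsum_comm, ← ENNReal.tsum_prod]
    refine tsum_congr fun p => ?_
    rw [hsum, hprod, ite_mul, zero_mul]
  have hcard : Fintype.card {i // i ≠ i₀} = u.card - 1 := by simp
  have hcardZ : Fintype.card ({j // j ≠ j₀} → Z) = (N - 1) ^ (s - 1) := by
    have h1 : Fintype.card Z = N - 1 := by
      rw [Fintype.card_coe]
      simp
    have h2 : Fintype.card {j // j ≠ j₀} = s - 1 := by simp
    rw [Fintype.card_fun, h1, h2]
  rw [← eZ.symm.sum_comp, Fintype.sum_prod_type_right]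
  calc ∑ zr, ∑ z, latSum N (fun j => ((eZ.symm (z, zr) j : Z) : ℤ)) u a
      = ∑ zr, ∑' kr, (∑ z : Z, ∑' k : ℤ,
          (if (N : ℤ) ∣ k * (z : ℤ) + c kr zr then wt a k else 0)) * ∏ j, wt a (kr j) := by
        refine Finset.sum_congr rfl fun zr _ => ?_
        rw [Finset.sum_congr rfl fun z _ => hlat (z, zr),
          ← Summable.tsum_finsetSum fun _ _ => ENNReal.summable]
        refine tsum_congr fun kr => ?_
        rw [Finset.sum_mul]
        exact Finset.sum_congr rfl fun z _ => ENNReal.tsum_mul_right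
    _ ≤ ∑ _zr : {j // j ≠ j₀} → Z, ∑' kr : {i // i ≠ i₀} → ℤ,
          (∑' k, wt a k) * ∏ j, wt a (kr j) := by
        gcongr
        exact sum_one_dim ha hN _
    _ = ((N - 1 : ℕ) : ℝ≥0∞) ^ (s - 1) * (∑' k : ℤ, wt a k) ^ u.card := by
        rw [ENNReal.tsum_mul_left, tsum_prod_pi _ _ _ hcard, ← pow_succ',
          Nat.sub_add_cancel (Finset.card_pos.2 ⟨j₀, hj₀⟩), Finset.sum_const, Finset.card_univ,
          hcardZ, nsmul_eq_mul]
        push_cast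
        rfl

lemma rpow_sum_le {ι : Type*} (F : Finset ι) (f : ι → ℝ≥0∞) {lam : ℝ} (h0 : 0 < lam)
    (h1 : lam ≤ 1) : (∑ i ∈ F, f i) ^ lam ≤ ∑ i ∈ F, f i ^ lam := by
  classical
  induction F using Finset.induction_on with
  | empty => simp [h0]
  | insert i F hi ih =>
    rw [Finset.sum_insert hi, Finset.sum_insert hi]
    exact (ENNReal.rpow_add_le_add_rpow _ _ h0.le h1).trans (by gcongr)

lemma rpow_tsum_le {ι : Type*} (f : ι → ℝ≥0∞) {lam : ℝ} (h0 : 0 < lam)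
    (h1 : lam ≤ 1) : (∑' i, f i) ^ lam ≤ ∑' i, f i ^ lam := by
  rw [← ENNReal.le_rpow_inv_iff h0]
  rw [ENNReal.tsum_eq_iSup_sum]
  refine iSup_le fun F => ?_
  rw [ENNReal.le_rpow_inv_iff h0]
  exact (rpow_sum_le F f h0 h1).trans (ENNReal.sum_le_tsum F)

lemma latSum_rpow_le (N : ℕ) {s : ℕ} (z : Fin s → ℤ) (u : Finset (Fin s)) (a : ℝ)
    {lam : ℝ} (h0 : 0 < lam) (h1 : lam ≤ 1) :
    latSum N z u a ^ lam ≤ latSum N z u (a * lam) := by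
  refine (rpow_tsum_le _ h0 h1).trans (ENNReal.tsum_le_tsum fun k => ?_)
  split_ifs
  · rw [← ENNReal.prod_rpow_of_nonneg h0.le]
    simp only [wt_rpow _ h0, le_refl]
  · simp [h0]

lemma dualSum_nonneg (N : ℕ) {s : ℕ} (z : Fin s → ℤ) (u : Finset (Fin s)) {α : ℕ}
    (hα : Even α) : 0 ≤ dualSum N z u α :=
  tsum_nonneg fun _ => Finset.prod_nonneg fun _ _ => one_div_nonneg.2 (hα.pow_nonneg _)

/-- Only an inequality is claimed, so summability of the defining series is not needed: a
divergent series has the junk value `0`. -/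
lemma ofReal_dualSum_le (N : ℕ) {s : ℕ} (z : Fin s → ℤ) (u : Finset (Fin s)) {α : ℕ}
    (hα : Even α) : ENNReal.ofReal (dualSum N z u α) ≤ latSum N z u α := by
  unfold dualSum
  by_cases hs : Summable (fun k : {k : {j // j ∈ u} → ℤ //
      (∀ j, k j ≠ 0) ∧ ((N : ℤ) ∣ ∑ j ∈ u.attach, k j * z j.1)} =>
      ∏ j ∈ u.attach, (1 : ℝ) / ((k.1 j : ℝ)) ^ α)
  · rw [ENNReal.ofReal_tsum_of_nonneg
      (fun k => Finset.prod_nonneg fun j _ => one_div_nonneg.2 (hα.pow_nonneg _)) hs]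
    refine le_trans (le_of_eq ?_) (ENNReal.tsum_comp_le_tsum_of_injective
      (Subtype.val_injective (p := fun k : {j // j ∈ u} → ℤ =>
        (∀ j, k j ≠ 0) ∧ ((N : ℤ) ∣ ∑ j ∈ u.attach, k j * z j.1))) _)
    refine tsum_congr fun k => ?_
    have hk : (N : ℤ) ∣ ∑ j, k.1 j * z j.1 := k.2.2
    rw [if_pos hk, Finset.univ_eq_attach, ENNReal.ofReal_prod_of_nonneg fun j _ => one_div_nonneg.2 (hα.pow_nonneg _)]
    refine Finset.prod_congr rfl fun j _ => ?_
    rw [wt, if_neg (k.2.1 j), Real.rpow_neg (abs_nonneg _), Real.rpow_natCast, hα.pow_abs,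
      one_div]
  · rw [tsum_eq_zero_of_not_summable hs]
    simp

lemma const_identity (α : ℕ) (n : ℕ) {g lam ζ : ℝ} (hg : 0 ≤ g) :
    Real.sqrt (g * (3 / (2 ^ (2 * α + 1) * π ^ (2 * α))) ^ n) ^ lam * (2 * ζ) ^ n =
      g ^ (lam / 2) * ((3 : ℝ) ^ (lam / 2) * ζ /
        ((2 : ℝ) ^ ((2 * (α : ℝ) + 1) * lam / 2 - 1) * π ^ ((α : ℝ) * lam))) ^ n := by
  have hpi := Real.pi_pos
  have hbase : (3 / (2 ^ (2 * α + 1) * π ^ (2 * α)) : ℝ) ^ (lam / 2) * (2 * ζ) =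
      (3 : ℝ) ^ (lam / 2) * ζ /
        ((2 : ℝ) ^ ((2 * (α : ℝ) + 1) * lam / 2 - 1) * π ^ ((α : ℝ) * lam)) := by
    rw [Real.div_rpow (by positivity) (by positivity), Real.mul_rpow (by positivity) (by positivity),
      ← Real.rpow_natCast, ← Real.rpow_natCast, ← Real.rpow_mul (by positivity),
      ← Real.rpow_mul (by positivity), Real.rpow_sub_one (by norm_num)]
    push_cast
    rw [show (2 * (α : ℝ) + 1) * (lam / 2) = (2 * (α : ℝ) + 1) * lam / 2 by ring,
      show 2 * (α : ℝ) * (lam / 2) = α * lam by ring]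
    field_simp
  rw [← hbase, mul_pow (_ ^ (lam / 2)) (2 * ζ), ← mul_assoc, Real.sqrt_eq_rpow,
    ← Real.rpow_mul (by positivity), Real.mul_rpow hg (by positivity),
    show 1 / 2 * lam = lam / 2 by ring, Real.rpow_pow_comm (by positivity)]

theorem stmt13 (α : ℕ) (hα : 2 ≤ α) (hαe : Even α) (N : ℕ) (hN : N.Prime) (s : ℕ) (hs : 0 < s)
    (γ : Finset (Fin s) → ℝ) (hγ : ∀ u : Finset (Fin s), 0 ≤ γ u)
    (lam : ℝ) (hlam1 : 1 / (α : ℝ) < lam) (hlam2 : lam ≤ 1) :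
    ∃ z : Fin s → ℤ, (∀ j, 1 ≤ z j ∧ z j ≤ (N : ℤ) - 1) ∧
      (∑ u ∈ Finset.univ.filter (fun u : Finset (Fin s) => u.Nonempty),
          Real.sqrt (γ u * (3 / (2 ^ (2 * α + 1) * π ^ (2 * α))) ^ u.card) * dualSum N z u α)
        ≤ ((N : ℝ) - 1) ^ (-(1 / lam)) *
          (∑ u ∈ Finset.univ.filter (fun u : Finset (Fin s) => u.Nonempty),
            γ u ^ (lam / 2) *
              ((3 : ℝ) ^ (lam / 2) * zetaR ((α : ℝ) * lam) /
                ((2 : ℝ) ^ ((2 * (α : ℝ) + 1) * lam / 2 - 1) * π ^ ((α : ℝ) * lam))) ^ u.card) ^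
            (1 / lam) := by
  have hα0 : (0 : ℝ) < α := by positivity
  have h0 : 0 < lam := lt_trans (by positivity) hlam1
  have ha : 1 < (α : ℝ) * lam := by rwa [div_lt_iff₀' hα0] at hlam1
  have hN1 := hN.one_lt
  have hNr : (0 : ℝ) < (N : ℝ) - 1 := by
    have : (1 : ℝ) < N := by exact_mod_cast hN1
    linarith
  have hζ : 0 ≤ zetaR ((α : ℝ) * lam) := tsum_nonneg fun n => by positivity
  set U := Finset.univ.filter (fun u : Finset (Fin s) => u.Nonempty) with hU
  set G : Finset (Fin s) → ℝ := fun u =>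
    Real.sqrt (γ u * (3 / (2 ^ (2 * α + 1) * π ^ (2 * α))) ^ u.card) with hG
  set Z := {x // x ∈ Finset.Icc (1 : ℤ) ((N : ℤ) - 1)} with hZ
  set B : ℝ := ∑ u ∈ U, γ u ^ (lam / 2) *
              ((3 : ℝ) ^ (lam / 2) * zetaR ((α : ℝ) * lam) /
                ((2 : ℝ) ^ ((2 * (α : ℝ) + 1) * lam / 2 - 1) * π ^ ((α : ℝ) * lam))) ^ u.card
    with hB
  have hBterm : ∀ u ∈ U, ENNReal.ofReal (G u) ^ lam * (∑' k : ℤ, wt (α * lam) k) ^ u.card =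
      ENNReal.ofReal (γ u ^ (lam / 2) *
              ((3 : ℝ) ^ (lam / 2) * zetaR ((α : ℝ) * lam) /
                ((2 : ℝ) ^ ((2 * (α : ℝ) + 1) * lam / 2 - 1) * π ^ ((α : ℝ) * lam))) ^ u.card) := by
    intro u _
    rw [tsum_wt ha, ENNReal.ofReal_rpow_of_nonneg (Real.sqrt_nonneg _) h0.le,
      ← ENNReal.ofReal_pow (by positivity), ← ENNReal.ofReal_mul (by positivity),
      ← const_identity α u.card (hγ u)]
  have hterm0 : ∀ u ∈ U, 0 ≤ γ u ^ (lam / 2) *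
              ((3 : ℝ) ^ (lam / 2) * zetaR ((α : ℝ) * lam) /
                ((2 : ℝ) ^ ((2 * (α : ℝ) + 1) * lam / 2 - 1) * π ^ ((α : ℝ) * lam))) ^ u.card :=
    fun u _ => mul_nonneg (Real.rpow_nonneg (hγ u) _) (by positivity)
  have hB0 : 0 ≤ B := Finset.sum_nonneg hterm0
  have hBsum : ∑ u ∈ U, ENNReal.ofReal (G u) ^ lam * (∑' k : ℤ, wt (α * lam) k) ^ u.card =
      ENNReal.ofReal B := by
    rw [Finset.sum_congr rfl hBterm, ENNReal.ofReal_sum_of_nonneg hterm0]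
  have hNe : ENNReal.ofReal ((N : ℝ) - 1) = ((N - 1 : ℕ) : ℝ≥0∞) := by
    rw [← ENNReal.ofReal_natCast, Nat.cast_sub hN1.le, Nat.cast_one]
  have hNe0 : ((N - 1 : ℕ) : ℝ≥0∞) ≠ 0 := by
    rw [Nat.cast_ne_zero]; omega
  -- some generating vector is at most average for the error with exponent `α * lam`
  obtain ⟨z, -, hz⟩ : ∃ z ∈ (Finset.univ : Finset (Fin s → Z)),
      ∑ u ∈ U, ENNReal.ofReal (G u) ^ lam * latSum N (fun j => (z j : ℤ)) u (α * lam)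
        ≤ ENNReal.ofReal (((N : ℝ) - 1)⁻¹ * B) := by
    have hne : Nonempty Z := ⟨⟨1, by rw [Finset.mem_Icc]; omega⟩⟩
    apply ENNReal.exists_le_of_sum_le Finset.univ_nonempty
    have hcard : Fintype.card (Fin s → Z) = (N - 1) ^ s := by
      have h1 : Fintype.card Z = N - 1 := by
        rw [Fintype.card_coe]
        simp
      rw [Fintype.card_fun, h1, Fintype.card_fin]
    rw [Finset.sum_comm, Finset.sum_const, Finset.card_univ, hcard, nsmul_eq_mul,
      ENNReal.ofReal_mul (by positivity), ENNReal.ofReal_inv_of_pos hNr, hNe, ← hBsum]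
    have hpow : (((N - 1) ^ s : ℕ) : ℝ≥0∞) * ((N - 1 : ℕ) : ℝ≥0∞)⁻¹
        = ((N - 1 : ℕ) : ℝ≥0∞) ^ (s - 1) := by
      obtain ⟨t, rfl⟩ : ∃ t, s = t + 1 := ⟨s - 1, by omega⟩
      rw [Nat.cast_pow, pow_succ, mul_assoc,
        ENNReal.mul_inv_cancel hNe0 (ENNReal.natCast_ne_top _), mul_one, Nat.add_sub_cancel]
    rw [← mul_assoc, hpow, Finset.mul_sum]
    refine Finset.sum_le_sum fun u hu => ?_
    rw [← Finset.mul_sum, mul_left_comm]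
    gcongr
    exact sum_latSum_le ha hN (Finset.mem_filter.1 hu).2
  refine ⟨fun j => (z j : ℤ), fun j => Finset.mem_Icc.1 (z j).2, ?_⟩
  have hrhs : ((N : ℝ) - 1) ^ (-(1 / lam)) * B ^ (1 / lam) = (((N : ℝ) - 1)⁻¹ * B) ^ (1 / lam) := by
    rw [Real.mul_rpow (by positivity) hB0, Real.inv_rpow hNr.le, Real.rpow_neg hNr.le]
  rw [hrhs]
  have hnn : 0 ≤ ((N : ℝ) - 1)⁻¹ * B := by positivity
  rw [← ENNReal.ofReal_le_ofReal_iff (by positivity),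
    ← ENNReal.ofReal_rpow_of_nonneg hnn (by positivity), one_div,
    ENNReal.le_rpow_inv_iff h0]
  refine le_trans ?_ hz
  calc _ ≤ (∑ u ∈ U, ENNReal.ofReal (G u) * latSum N (fun j => (z j : ℤ)) u α) ^ lam := by
        gcongr
        rw [ENNReal.ofReal_sum_of_nonneg fun u _ =>
          mul_nonneg (Real.sqrt_nonneg _) (dualSum_nonneg _ _ _ hαe)]
        refine Finset.sum_le_sum fun u _ => ?_
        rw [ENNReal.ofReal_mul (Real.sqrt_nonneg _)]
        gcongr
        exact ofReal_dualSum_le _ _ _ hαe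
    _ ≤ ∑ u ∈ U, (ENNReal.ofReal (G u) * latSum N (fun j => (z j : ℤ)) u α) ^ lam :=
        rpow_sum_le _ _ h0 hlam2
    _ ≤ _ := by
        refine Finset.sum_le_sum fun u _ => ?_
        rw [ENNReal.mul_rpow_of_nonneg _ _ h0.le]
        gcongr
        exact latSum_rpow_le _ _ _ _ h0 hlam2
end

section
/- Let α be a positive integer and let f:[0,1]→ℝ be such that f^{(τ)} is absolutely continuous for τ = 0,…,α−1, f^{(α)} ∈ L²[0,1], and f^{(τ)}(0) = f^{(τ)}(1) = 0 for every odd integer τ with 1 ≤ τ ≤ α−1. Then for every positive integer k, √2·∫₀¹ f(x)·cos(πkx) dx = ( √2 / (−πk)^α ) · ∫₀¹ f^{(α)}(x) · cs_α(πkx) dx. -/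
/-!
The identity is `α`-fold integration by parts. Since `cs_τ(cx)` has antiderivative
`cs_{τ+1}(cx) / c` (`hasDerivAt_csa`), each step replaces `∫ f^{(τ)} cs_τ` by
`-(1/c) ∫ f^{(τ+1)} cs_{τ+1}` with `c = πk`, up to a boundary term. For even `τ` the boundary
term vanishes because `cs_{τ+1} = ± sin` is zero at integer multiples of `π`; for odd `τ` it
vanishes by the boundary conditions on `f^{(τ)}`. The derivatives are only known to be
integrable, so the integration by parts is the one for absolutely continuous functions
(`integral_mul_deriv_of_primitive`).
-/

open Real MeasureTheory

/-- `cs_α(x) = (−1)^{(α−1)/2} sin x` for odd `α` and `(−1)^{α/2} cos x` for even `α`. -/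
noncomputable def csa (α : ℕ) (x : ℝ) : ℝ :=
  if Odd α then (-1 : ℝ) ^ ((α - 1) / 2) * Real.sin x
  else (-1 : ℝ) ^ (α / 2) * Real.cos x

/-- Integration by parts on `[0, 1]` where `u` is merely the primitive of an integrable
function `u'`. -/
lemma integral_mul_deriv_of_primitive {u u' v v' : ℝ → ℝ}
    (hu' : IntervalIntegrable u' volume 0 1)
    (hu : ∀ x ∈ Set.Icc (0 : ℝ) 1, u x = u 0 + ∫ t in (0 : ℝ)..x, u' t)
    (hv : ContDiff ℝ 1 v) (hvv' : ∀ x, HasDerivAt v (v' x) x) :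
    ∫ x in (0 : ℝ)..1, u x * v' x = u 1 * v 1 - u 0 * v 0 - ∫ x in (0 : ℝ)..1, u' x * v x := by
  -- `u` is unconstrained outside `[0, 1]`, so its derivative is taken on the global primitive `U`.
  set U : ℝ → ℝ := fun x => u 0 + ∫ t in (0 : ℝ)..x, u' t with hU
  have hUac : AbsolutelyContinuousOnInterval U 0 1 :=
    (contDiff_const (c := u 0)).contDiffOn.absolutelyContinuousOnInterval.fun_add
      (hu'.absolutelyContinuousOnInterval_intervalIntegral (c := 0) (by simp))
  have hparts := hUac.integral_mul_deriv_eq_deriv_mul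
    (hv.contDiffOn (s := Set.uIcc 0 1)).absolutelyContinuousOnInterval
  have h1 : ∫ x in (0 : ℝ)..1, U x * deriv v x = ∫ x in (0 : ℝ)..1, u x * v' x := by
    apply intervalIntegral.integral_congr
    intro x hx
    rw [Set.uIcc_of_le zero_le_one] at hx
    simp only [(hvv' x).deriv, hU, ← hu x hx]
  have h2 : ∫ x in (0 : ℝ)..1, deriv U x * v x = ∫ x in (0 : ℝ)..1, u' x * v x := by
    apply intervalIntegral.integral_congr_ae
    filter_upwards [hu'.ae_hasDerivAt_integral] with x hx hx'
    have hd := (hx (Set.uIoc_subset_uIcc hx') 0 (by simp)).const_add (u 0)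
    rw [hd.deriv]
  have hU0 : U 0 = u 0 := by simp [hU]
  have hU1 : U 1 = u 1 := (hu 1 (by simp)).symm
  rw [← h1, ← h2, hparts, hU0, hU1]

lemma csa_even (m : ℕ) (x : ℝ) : csa (2 * m) x = (-1) ^ m * Real.cos x := by
  simp [csa]

lemma csa_odd (m : ℕ) (x : ℝ) : csa (2 * m + 1) x = (-1) ^ m * Real.sin x := by
  simp [csa]

lemma hasDerivAt_csa (n : ℕ) (x : ℝ) : HasDerivAt (csa (n + 1)) (csa n x) x := by
  obtain ⟨m, rfl | rfl⟩ := Nat.even_or_odd' n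
  · rw [csa_even, funext (csa_odd m)]
    exact (Real.hasDerivAt_sin x).const_mul _
  · rw [csa_odd, show 2 * m + 1 + 1 = 2 * (m + 1) by ring, funext (csa_even (m + 1))]
    exact ((Real.hasDerivAt_cos x).const_mul ((-1 : ℝ) ^ (m + 1))).congr_deriv (by ring)

lemma contDiff_csa (n : ℕ) : ContDiff ℝ 1 (csa n) := by
  obtain ⟨m, rfl | rfl⟩ := Nat.even_or_odd' n
  · rw [funext (csa_even m)]
    exact contDiff_const.mul Real.contDiff_cos
  · rw [funext (csa_odd m)]
    exact contDiff_const.mul Real.contDiff_sin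

theorem stmt15 (α : ℕ) (hα : 1 ≤ α) (f : ℝ → ℝ) (g : ℕ → ℝ → ℝ)
    (hg0 : g 0 = f)
    (hint : ∀ τ ≤ α, IntervalIntegrable (g τ) volume 0 1)
    (hac : ∀ τ < α, ∀ x ∈ Set.Icc (0 : ℝ) 1, g τ x = g τ 0 + ∫ t in (0 : ℝ)..x, g (τ + 1) t)
    (hL2 : IntervalIntegrable (fun x => (g α x) ^ 2) volume 0 1)
    (hbc : ∀ τ, Odd τ → 1 ≤ τ → τ ≤ α - 1 → g τ 0 = 0 ∧ g τ 1 = 0)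
    (k : ℕ) (hk : 0 < k) :
    Real.sqrt 2 * ∫ x in (0 : ℝ)..1, f x * Real.cos (π * (k : ℝ) * x) =
      (Real.sqrt 2 / (-(π * (k : ℝ))) ^ α) *
        ∫ x in (0 : ℝ)..1, g α x * csa α (π * (k : ℝ) * x) := by
  set c : ℝ := π * (k : ℝ) with hc
  have hc0 : c ≠ 0 := by positivity
  have hsin : Real.sin c = 0 := by rw [hc, mul_comm]; exact Real.sin_nat_mul_pi k
  have step : ∀ τ < α, -c * ∫ x in (0 : ℝ)..1, g τ x * csa τ (c * x) =
      ∫ x in (0 : ℝ)..1, g (τ + 1) x * csa (τ + 1) (c * x) := by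
    intro τ hτ
    have hd : ∀ x, HasDerivAt (fun x => csa (τ + 1) (c * x)) (csa τ (c * x) * c) x := fun x =>
      (hasDerivAt_csa τ (c * x)).comp x (by simpa using (hasDerivAt_id x).const_mul c)
    have hparts := integral_mul_deriv_of_primitive (hint (τ + 1) hτ) (hac τ hτ)
      ((contDiff_csa (τ + 1)).comp (contDiff_const.mul contDiff_id)) hd
    have hbd : g τ 1 * csa (τ + 1) (c * 1) - g τ 0 * csa (τ + 1) (c * 0) = 0 := by
      obtain ⟨m, rfl | rfl⟩ := Nat.even_or_odd' τ
      · simp [csa_odd, hsin]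
      · obtain ⟨h0, h1⟩ := hbc (2 * m + 1) (odd_two_mul_add_one m) (by omega) (by omega)
        simp [h0, h1]
    simp only [← mul_assoc, intervalIntegral.integral_mul_const] at hparts
    simp only [Function.comp_apply, id] at hparts
    linarith
  have key : ∀ τ ≤ α, (-c) ^ τ * ∫ x in (0 : ℝ)..1, f x * Real.cos (c * x) =
      ∫ x in (0 : ℝ)..1, g τ x * csa τ (c * x) := by
    intro τ
    induction τ with
    | zero => intro _; simp [hg0, csa]
    | succ τ ih =>
      intro hτ
      rw [← step τ hτ, ← ih (by omega)]
      ring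
  rw [← key α le_rfl]
  have : (-c) ^ α ≠ 0 := pow_ne_zero _ (neg_ne_zero.mpr hc0)
  field_simp
end

section
/- Let α be a positive integer and let f:[0,1]→ℝ be such that f^{(τ)} is absolutely continuous for τ = 0,…,α−1, f^{(α)} ∈ L²[0,1], and f^{(τ)}(0) = f^{(τ)}(1) = 0 for every odd integer τ with 1 ≤ τ ≤ α−1. Then Σ_{k=1}^∞ k^{2α} · ( √2·∫₀¹ f(x)·cos(πkx) dx )² ≤ π^{−2α} · ∫₀¹ ( f^{(α)}(x) )² dx; in particular the series on the left converges. -/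
/-!
Integrating by parts `α` times moves all derivatives onto `f`. The cosine pairs with the even-order
derivatives and the sine with the odd-order ones: in the step from an even order the boundary term
vanishes because `sin (π k x)` is zero at `0` and `1`, and in the step from an odd order it vanishes
by the boundary condition on `g τ`. Hence `(π k)^(2α) (∫ f cos(π k x))² = (∫ g α · T)²`, where `T`
is `cos (π k x)` or `sin (π k x)` according to the parity of `α` (`sq_coeff_step`, `sq_coeff`).
Both families `√2 cos (π k x)` and `√2 sin (π k x)`, `k ≥ 1`, are orthonormal in `L²[0,1]`, so the
bound is Bessel's inequality (`bessel_interval`) for `g α`, divided by `π^(2α)`.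
-/

open Real MeasureTheory

/-- Bessel's inequality on `[0,1]` for a finite orthonormal family of continuous functions. -/
lemma bessel_interval {ι : Type*} [DecidableEq ι] (s : Finset ι) (e : ι → ℝ → ℝ)
    (he : ∀ i, Continuous (e i))
    (horth : ∀ i j, ∫ x in (0 : ℝ)..1, e i x * e j x = if i = j then 1 else 0)
    (G : ℝ → ℝ) (hG : IntervalIntegrable G volume 0 1)
    (hG2 : IntervalIntegrable (fun x => G x ^ 2) volume 0 1) :
    ∑ i ∈ s, (∫ x in (0 : ℝ)..1, G x * e i x) ^ 2 ≤ ∫ x in (0 : ℝ)..1, G x ^ 2 := by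
  set c : ι → ℝ := fun i => ∫ x in (0 : ℝ)..1, G x * e i x with hc
  set S : ℝ → ℝ := fun x => ∑ i ∈ s, c i * e i x with hS
  have hScont : Continuous S := by
    rw [hS]; exact continuous_finsetSum _ fun i _ => continuous_const.mul (he i)
  have hGS : IntervalIntegrable (fun x => G x * S x) volume 0 1 :=
    hG.mul_continuousOn hScont.continuousOn
  have hS2 : IntervalIntegrable (fun x => S x ^ 2) volume 0 1 :=
    (hScont.pow 2).intervalIntegrable _ _
  have h1 : ∫ x in (0 : ℝ)..1, G x * S x = ∑ i ∈ s, c i ^ 2 := by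
    have : ∀ x, G x * S x = ∑ i ∈ s, c i * (G x * e i x) := fun x => by
      rw [hS, Finset.mul_sum]; exact Finset.sum_congr rfl fun i _ => by ring
    simp_rw [this]
    rw [intervalIntegral.integral_finsetSum]
    · refine Finset.sum_congr rfl fun i _ => ?_
      rw [intervalIntegral.integral_const_mul, sq]
    · intro i _
      exact (hG.mul_continuousOn (he i).continuousOn).const_mul _
  have h2 : ∫ x in (0 : ℝ)..1, S x ^ 2 = ∑ i ∈ s, c i ^ 2 := by
    have : ∀ x, S x ^ 2 = ∑ i ∈ s, ∑ j ∈ s, c i * c j * (e i x * e j x) := fun x => by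
      rw [sq, hS, Finset.sum_mul_sum]
      exact Finset.sum_congr rfl fun i _ => Finset.sum_congr rfl fun j _ => by ring
    simp_rw [this]
    rw [intervalIntegral.integral_finsetSum]
    · refine Finset.sum_congr rfl fun i hi => ?_
      rw [intervalIntegral.integral_finsetSum]
      · simp_rw [intervalIntegral.integral_const_mul, horth]
        simp [hi, sq]
      · intro j _
        exact (continuous_const.mul ((he i).mul (he j))).intervalIntegrable _ _
    · intro i _
      exact (continuous_finsetSum _ fun j _ =>
        continuous_const.mul ((he i).mul (he j))).intervalIntegrable _ _
  have h0 : 0 ≤ ∫ x in (0 : ℝ)..1, (G x - S x) ^ 2 :=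
    intervalIntegral.integral_nonneg zero_le_one fun x _ => sq_nonneg _
  have h3 : ∫ x in (0 : ℝ)..1, (G x - S x) ^ 2 =
      (∫ x in (0 : ℝ)..1, G x ^ 2) - 2 * (∫ x in (0 : ℝ)..1, G x * S x) +
        ∫ x in (0 : ℝ)..1, S x ^ 2 := by
    rw [← intervalIntegral.integral_const_mul, ← intervalIntegral.integral_sub hG2 (hGS.const_mul 2),
      ← intervalIntegral.integral_add (hG2.sub (hGS.const_mul 2)) hS2]
    exact intervalIntegral.integral_congr fun x _ => by ring
  rw [h3, h1, h2] at h0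
  linarith

lemma integral_cos_pi_int (m : ℤ) :
    ∫ x in (0 : ℝ)..1, cos (π * (m : ℝ) * x) = if m = 0 then 1 else 0 := by
  split_ifs with h
  · simp [h]
  · have : π * (m : ℝ) ≠ 0 := mul_ne_zero pi_ne_zero (by exact_mod_cast h)
    rw [intervalIntegral.integral_comp_mul_left (fun x => cos x) this, integral_cos]
    simp [mul_comm π]

/-- `cos (π k x)` for even `τ` and `sin (π k x)` for odd `τ`. -/
noncomputable def parityTrig (τ : ℕ) (k : ℕ) (x : ℝ) : ℝ :=
  if Even τ then cos (π * k * x) else sin (π * k * x)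

lemma continuous_parityTrig (τ k : ℕ) : Continuous (parityTrig τ k) := by
  unfold parityTrig; split_ifs <;> fun_prop

lemma parityTrig_orthonormal (τ : ℕ) (j k : ℕ+) :
    ∫ x in (0 : ℝ)..1, (√2 * parityTrig τ j x) * (√2 * parityTrig τ k x)
      = if j = k then 1 else 0 := by
  have hm := integral_cos_pi_int (((j : ℕ) : ℤ) - ((k : ℕ) : ℤ))
  have hp := integral_cos_pi_int (((j : ℕ) : ℤ) + ((k : ℕ) : ℤ))
  have hj := j.pos
  rw [if_neg (by omega)] at hp
  have hjk : (((j : ℕ) : ℤ) - ((k : ℕ) : ℤ) = 0) ↔ j = k := by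
    rw [sub_eq_zero, Nat.cast_inj, PNat.coe_inj]
  simp only [hjk] at hm
  push_cast at hm hp
  have h2 : √2 * √2 = (2 : ℝ) := mul_self_sqrt (by norm_num)
  have im : IntervalIntegrable (fun x : ℝ => cos (π * ((j : ℕ) - (k : ℕ) : ℝ) * x)) volume 0 1 :=
    (by fun_prop : Continuous _).intervalIntegrable _ _
  have ip : IntervalIntegrable (fun x : ℝ => cos (π * ((j : ℕ) + (k : ℕ) : ℝ) * x)) volume 0 1 :=
    (by fun_prop : Continuous _).intervalIntegrable _ _
  have em : ∀ x : ℝ, π * ((j : ℕ) - (k : ℕ) : ℝ) * x = π * (j : ℕ) * x - π * (k : ℕ) * x :=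
    fun x => by ring
  have ep : ∀ x : ℝ, π * ((j : ℕ) + (k : ℕ) : ℝ) * x = π * (j : ℕ) * x + π * (k : ℕ) * x :=
    fun x => by ring
  -- product-to-sum formulas
  by_cases hτ : Even τ
  · calc _ = ∫ x in (0 : ℝ)..1, (cos (π * ((j : ℕ) - (k : ℕ) : ℝ) * x) +
            cos (π * ((j : ℕ) + (k : ℕ) : ℝ) * x)) := by
          refine intervalIntegral.integral_congr fun x _ => ?_
          simp only [parityTrig, hτ, if_true, em, ep, cos_sub, cos_add]
          linear_combination (cos (π * (j : ℕ) * x) * cos (π * (k : ℕ) * x)) * h2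
      _ = _ := by rw [intervalIntegral.integral_add im ip, hm, hp, add_zero]
  · calc _ = ∫ x in (0 : ℝ)..1, (cos (π * ((j : ℕ) - (k : ℕ) : ℝ) * x) -
            cos (π * ((j : ℕ) + (k : ℕ) : ℝ) * x)) := by
          refine intervalIntegral.integral_congr fun x _ => ?_
          simp only [parityTrig, hτ, if_false, em, ep, cos_sub, cos_add]
          linear_combination (sin (π * (j : ℕ) * x) * sin (π * (k : ℕ) * x)) * h2
      _ = _ := by rw [intervalIntegral.integral_sub im ip, hm, hp, sub_zero]

/-- Integration by parts for `u` an indefinite integral of `v`, against a `C¹` function `w`. -/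
lemma integral_parts (u v w w' : ℝ → ℝ) (hv : IntervalIntegrable v volume 0 1)
    (hu : ∀ x ∈ Set.Icc (0 : ℝ) 1, u x = u 0 + ∫ t in (0 : ℝ)..x, v t)
    (hw : ∀ x, HasDerivAt w (w' x) x) (hw' : Continuous w') :
    ∫ x in (0 : ℝ)..1, u x * w' x =
      u 1 * w 1 - u 0 * w 0 - ∫ x in (0 : ℝ)..1, v x * w x := by
  -- `u` is arbitrary off `[0,1]`; it is replaced by `U`, which is given by one formula everywhere.
  set U : ℝ → ℝ := fun x => u 0 + ∫ t in (0 : ℝ)..x, v t with hU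
  have hconst : AbsolutelyContinuousOnInterval (fun _ : ℝ => u 0) 0 1 :=
    contDiffOn_const.absolutelyContinuousOnInterval
  have hUac : AbsolutelyContinuousOnInterval U 0 1 :=
    hconst.add (hv.absolutelyContinuousOnInterval_intervalIntegral (by simp))
  have hderiv : deriv w = w' := funext fun x => (hw x).deriv
  have hwac : AbsolutelyContinuousOnInterval w 0 1 := by
    refine (ContDiff.contDiffOn ?_).absolutelyContinuousOnInterval
    exact contDiff_one_iff_deriv.2 ⟨fun x => (hw x).differentiableAt, hderiv ▸ hw'⟩
  have key := hUac.integral_mul_deriv_eq_deriv_mul hwac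
  have e1 : ∫ x in (0 : ℝ)..1, U x * deriv w x = ∫ x in (0 : ℝ)..1, u x * w' x := by
    refine intervalIntegral.integral_congr fun x hx => ?_
    rw [Set.uIcc_of_le zero_le_one] at hx
    simp only [hderiv, hu x hx, hU]
  have e2 : ∫ x in (0 : ℝ)..1, deriv U x * w x = ∫ x in (0 : ℝ)..1, v x * w x := by
    refine intervalIntegral.integral_congr_ae ?_
    filter_upwards [hv.ae_hasDerivAt_integral] with x hx hx'
    have := (hx (Set.uIoc_subset_uIcc hx') 0 (by simp)).const_add (u 0)
    rw [show deriv U x = v x from this.deriv]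
  rw [e1, e2] at key
  rw [key, hu 1 (by simp)]
  simp [hU]

/-- One integration by parts, squared so that its sign does not matter. The boundary term vanishes
through the sine when `τ` is even and through `hbc` when `τ` is odd. -/
lemma sq_coeff_step (τ k : ℕ) (u v : ℝ → ℝ)
    (hv : IntervalIntegrable v volume 0 1)
    (hu : ∀ x ∈ Set.Icc (0 : ℝ) 1, u x = u 0 + ∫ t in (0 : ℝ)..x, v t)
    (hbc : Odd τ → u 0 = 0 ∧ u 1 = 0) :
    (π * k) ^ 2 * (∫ x in (0 : ℝ)..1, u x * parityTrig τ k x) ^ 2 =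
      (∫ x in (0 : ℝ)..1, v x * parityTrig (τ + 1) k x) ^ 2 := by
  have hlin : ∀ x : ℝ, HasDerivAt (fun x : ℝ => π * k * x) (π * k) x := fun x => by
    simpa using (hasDerivAt_id x).const_mul (π * k)
  rw [← mul_pow, ← intervalIntegral.integral_const_mul]
  rcases Nat.even_or_odd τ with h | h
  · have h' : ¬ Even (τ + 1) := by simpa [Nat.even_add_one] using h
    have key := integral_parts u v (fun x => sin (π * k * x)) (fun x => cos (π * k * x) * (π * k))
      hv hu (fun x => (hlin x).sin) (by fun_prop)
    have hs : sin (π * k) = 0 := by rw [mul_comm]; exact sin_nat_mul_pi k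
    simp only [mul_one, mul_zero, sin_zero, hs, sub_zero, zero_sub] at key
    simp only [parityTrig, h, h', if_true, if_false]
    rw [← neg_sq (∫ x in (0 : ℝ)..1, v x * sin (π * k * x)), ← key]
    congr 1
    exact intervalIntegral.integral_congr fun x _ => by ring
  · have h' : Even (τ + 1) := h.add_one
    have h0 : ¬ Even τ := Nat.not_even_iff_odd.2 h
    obtain ⟨b0, b1⟩ := hbc h
    have key := integral_parts u v (fun x => cos (π * k * x)) (fun x => -sin (π * k * x) * (π * k))
      hv hu (fun x => (hlin x).cos) (by fun_prop)
    simp only [b0, b1, zero_mul, sub_zero, zero_sub] at key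
    simp only [parityTrig, h0, h', if_true, if_false]
    rw [← neg_sq (∫ x in (0 : ℝ)..1, v x * cos (π * k * x)), ← key, ← neg_sq,
      ← intervalIntegral.integral_neg]
    congr 1
    exact intervalIntegral.integral_congr fun x _ => by ring

lemma sq_coeff (α k : ℕ) (g : ℕ → ℝ → ℝ)
    (hint : ∀ τ ≤ α, IntervalIntegrable (g τ) volume 0 1)
    (hac : ∀ τ < α, ∀ x ∈ Set.Icc (0 : ℝ) 1, g τ x = g τ 0 + ∫ t in (0 : ℝ)..x, g (τ + 1) t)
    (hbc : ∀ τ, Odd τ → 1 ≤ τ → τ ≤ α - 1 → g τ 0 = 0 ∧ g τ 1 = 0) :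
    ∀ τ ≤ α, (π * k) ^ (2 * τ) * (∫ x in (0 : ℝ)..1, g 0 x * cos (π * k * x)) ^ 2 =
      (∫ x in (0 : ℝ)..1, g τ x * parityTrig τ k x) ^ 2 := by
  intro τ
  induction τ with
  | zero => intro _; simp [parityTrig]
  | succ n ih =>
    intro hn
    rw [← sq_coeff_step n k (g n) (g (n + 1)) (hint _ hn) (hac n hn)
      (fun ho => hbc n ho ho.pos (by omega)), ← ih (by omega)]
    ring

theorem stmt16 (α : ℕ) (hα : 1 ≤ α) (f : ℝ → ℝ) (g : ℕ → ℝ → ℝ)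
    (hg0 : g 0 = f)
    (hint : ∀ τ ≤ α, IntervalIntegrable (g τ) volume 0 1)
    (hac : ∀ τ < α, ∀ x ∈ Set.Icc (0 : ℝ) 1, g τ x = g τ 0 + ∫ t in (0 : ℝ)..x, g (τ + 1) t)
    (hL2 : IntervalIntegrable (fun x => (g α x) ^ 2) volume 0 1)
    (hbc : ∀ τ, Odd τ → 1 ≤ τ → τ ≤ α - 1 → g τ 0 = 0 ∧ g τ 1 = 0) :
    Summable (fun k : ℕ+ => ((k : ℕ) : ℝ) ^ (2 * α) *
      (Real.sqrt 2 * ∫ x in (0 : ℝ)..1, f x * Real.cos (π * ((k : ℕ) : ℝ) * x)) ^ 2) ∧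
    (∑' k : ℕ+, ((k : ℕ) : ℝ) ^ (2 * α) *
        (Real.sqrt 2 * ∫ x in (0 : ℝ)..1, f x * Real.cos (π * ((k : ℕ) : ℝ) * x)) ^ 2)
      ≤ (1 / π ^ (2 * α)) * ∫ x in (0 : ℝ)..1, (g α x) ^ 2 := by
  subst hg0
  have hterm : ∀ k : ℕ+, ((k : ℕ) : ℝ) ^ (2 * α) *
      (√2 * ∫ x in (0 : ℝ)..1, g 0 x * cos (π * ((k : ℕ) : ℝ) * x)) ^ 2 =
      (1 / π ^ (2 * α)) * (∫ x in (0 : ℝ)..1, g α x * (√2 * parityTrig α k x)) ^ 2 := by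
    intro k
    have h := sq_coeff α k g hint hac hbc α le_rfl
    have e : ∫ x in (0 : ℝ)..1, g α x * (√2 * parityTrig α k x) =
        √2 * ∫ x in (0 : ℝ)..1, g α x * parityTrig α k x := by
      rw [← intervalIntegral.integral_const_mul]
      exact intervalIntegral.integral_congr fun x _ => by ring
    rw [e, mul_pow, mul_pow, ← h, mul_pow]
    have : π ^ (2 * α) ≠ 0 := pow_ne_zero _ pi_ne_zero
    field_simp
  have hnonneg : (0 : ℕ+ → ℝ) ≤ fun k : ℕ+ => ((k : ℕ) : ℝ) ^ (2 * α) *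
      (√2 * ∫ x in (0 : ℝ)..1, g 0 x * cos (π * ((k : ℕ) : ℝ) * x)) ^ 2 :=
    fun k => by simp only [Pi.zero_apply]; positivity
  have hbound : ∀ s : Finset ℕ+, ∑ k ∈ s, ((k : ℕ) : ℝ) ^ (2 * α) *
      (√2 * ∫ x in (0 : ℝ)..1, g 0 x * cos (π * ((k : ℕ) : ℝ) * x)) ^ 2 ≤
      (1 / π ^ (2 * α)) * ∫ x in (0 : ℝ)..1, (g α x) ^ 2 := by
    intro s
    rw [Finset.sum_congr rfl fun k _ => hterm k, ← Finset.mul_sum]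
    exact mul_le_mul_of_nonneg_left
      (bessel_interval s (fun (k : ℕ+) x => √2 * parityTrig α k x)
        (fun k => continuous_const.mul (continuous_parityTrig α k))
        (parityTrig_orthonormal α) (g α) (hint α le_rfl) hL2) (by positivity)
  exact ⟨summable_of_sum_le hnonneg hbound, Real.tsum_le_of_sum_le hnonneg hbound⟩
end
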